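/- arXiv:2007.08169 — 5 statements merged into one kernel-verified Lean document; each statement's English description precedes it below -/
import Mathlib

section
/- For every 0 < ε ≤ 1 there exists a constant K_ε > 1 such that for every 0 < δ ≤ 1 there exists a constant K̃_{ε,δ} > 1 such that for all multi-indices α, β ∈ ℕ^n, all N ∈ ℕ and all f ∈ E_N, ‖x^α ∂_x^β f‖_{L²(ℝ^n)} ≤ K̃_{ε,δ} (δ K_ε)^{|α|+|β|} Γ( (|α|+|β|)/(2−ε) + 2 ) e^{N^{1−ε/2}/δ^{2−ε}} ‖f‖_{L²(ℝ^n)}. -/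
open MeasureTheory
open scoped BigOperators ENNReal NNReal

noncomputable section

abbrev En (n : ℕ) := EuclideanSpace ℝ (Fin n)

/-- One-dimensional Hermite function. -/
def hermite1 (k : ℕ) (x : ℝ) : ℝ :=
  (-1 : ℝ) ^ k * ((2 ^ k * (k.factorial : ℝ) * Real.sqrt Real.pi) ^ (-(1/2 : ℝ))) *
    Real.exp (x ^ 2 / 2) * iteratedDeriv k (fun y => Real.exp (-y ^ 2)) x

/-- Tensorized Hermite function on ℝⁿ. -/
def hermiteFun (n : ℕ) (α : Fin n → ℕ) (x : En n) : ℂ :=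
  ∏ j, (hermite1 (α j) (x j) : ℂ)

/-- The span E_N of Hermite functions with |α| ≤ N. -/
def hermiteSpan (n N : ℕ) : Submodule ℂ (En n → ℂ) :=
  Submodule.span ℂ {g | ∃ α : Fin n → ℕ, (∑ j, α j) ≤ N ∧ g = hermiteFun n α}

/-- Partial derivative in direction j. -/
def pderiv1 {n : ℕ} (j : Fin n) (f : En n → ℂ) : En n → ℂ :=
  fun x => fderiv ℝ f x (EuclideanSpace.single j (1 : ℝ))

/-- Multi-index partial derivative ∂^β. -/
def pderivMulti {n : ℕ} (β : Fin n → ℕ) (f : En n → ℂ) : En n → ℂ :=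
  (List.finRange n).foldr (fun j g => (pderiv1 j)^[β j] g) f

/-- Monomial x^α. -/
def monomial (n : ℕ) (α : Fin n → ℕ) (x : En n) : ℝ := ∏ j, (x j) ^ (α j)

/-- L² norm on ℝⁿ. -/
def L2norm (n : ℕ) (f : En n → ℂ) : ℝ := Real.sqrt (∫ x, ‖f x‖ ^ 2)

/-- Japanese bracket ⟨x⟩. -/
def jap (n : ℕ) (x : En n) : ℝ := Real.sqrt (1 + ‖x‖ ^ 2)

lemma rpow_le_exp_mul_Gamma {t s : ℝ} (ht : 0 ≤ t) (hs : 0 ≤ s) :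
    t ^ s ≤ Real.exp t * Real.Gamma (s + 1) := by
  have hs1 : 0 < s + 1 := by linarith
  have hint := Real.GammaIntegral_convergent hs1
  have h1 : ∫ x in Set.Ioi t, Real.exp (-x) * x ^ (s + 1 - 1) ≤ Real.Gamma (s + 1) := by
    rw [Real.Gamma_eq_integral hs1]
    apply setIntegral_mono_set hint
    · filter_upwards [ae_restrict_mem measurableSet_Ioi] with x hx
      have : 0 < x := hx
      positivity
    · exact (Set.Ioi_subset_Ioi ht).eventuallyLE
  have h2 : ∫ x in Set.Ioi t, Real.exp (-x) * t ^ s ≤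
      ∫ x in Set.Ioi t, Real.exp (-x) * x ^ (s + 1 - 1) := by
    apply setIntegral_mono_on
    · exact ((integrableOn_exp_neg_Ioi t)).mul_const _
    · exact hint.mono_set (Set.Ioi_subset_Ioi ht)
    · exact measurableSet_Ioi
    · intro x hx
      have hx' : t < x := hx
      rw [add_sub_cancel_right]
      gcongr
  rw [integral_mul_const, integral_exp_neg_Ioi] at h2
  have h3 := h2.trans h1
  calc t ^ s = Real.exp t * (Real.exp (-t) * t ^ s) := by
        rw [← mul_assoc, ← Real.exp_add]; simp
    _ ≤ _ := by gcongr

lemma young_aux {q D m : ℝ} (hq : 0 < q) (hq1 : q < 1) (hD : 0 ≤ D) (hm : 0 ≤ m) :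
    m ^ q * D ≤ m + D ^ (1 / (1 - q)) := by
  have h1q : 0 < 1 - q := by linarith
  have hA : 0 ≤ D ^ (1 / (1 - q)) := by positivity
  have := Real.geom_mean_le_arith_mean2_weighted hq.le h1q.le hm hA (by ring)
  rw [← Real.rpow_mul hD, one_div_mul_cancel h1q.ne', Real.rpow_one] at this
  nlinarith

lemma numeric_bound (ε : ℝ) (hε : 0 < ε) (hε1 : ε ≤ 1) :
    ∃ K : ℝ, 1 < K ∧ ∀ δ : ℝ, 0 < δ → δ ≤ 1 → ∃ Kt : ℝ, 1 < Kt ∧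
      ∀ (m N : ℕ), (Real.sqrt (2 * ((N + m : ℕ) : ℝ))) ^ m ≤
          Kt * (δ * K) ^ m * Real.Gamma ((m : ℝ) / (2 - ε) + 2) *
            Real.exp ((N : ℝ) ^ (1 - ε / 2) / δ ^ (2 - ε)) := by
  have hs2 : 1 ≤ Real.sqrt 2 := by
    rw [Real.one_le_sqrt]; norm_num
  have he : 1 < Real.exp 1 := by simp
  refine ⟨Real.sqrt 2 * Real.exp 1, by nlinarith, ?_⟩
  intro δ hδ hδ1
  have hp : 0 < 2 - ε := by linarith
  set D : ℝ := 1 / δ ^ (2 - ε) with hD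
  have hDpos : 0 < D := by positivity
  set C : ℝ := D ^ (1 / (1 - (1 - ε / 2))) with hC
  have hCpos : 0 < C := by positivity
  refine ⟨Real.exp C, by simpa using hCpos, ?_⟩
  intro m N
  set M : ℝ := ((N + m : ℕ) : ℝ) with hM
  have hM0 : 0 ≤ M := by positivity
  have hs : 0 ≤ (m : ℝ) / (2 - ε) := by positivity
  have ht : 0 ≤ M ^ (1 - ε / 2) * D := by positivity
  have hG := rpow_le_exp_mul_Gamma ht hs
  have hlhs : (Real.sqrt M) ^ m = δ ^ m * (M ^ (1 - ε / 2) * D) ^ ((m : ℝ) / (2 - ε)) := by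
    rw [Real.mul_rpow (by positivity) hDpos.le, ← Real.rpow_mul hM0, hD, Real.div_rpow (by positivity) (by positivity),
      ← Real.rpow_mul hδ.le, Real.one_rpow]
    have e1 : (1 - ε / 2) * ((m : ℝ) / (2 - ε)) = (1/2) * m := by field_simp
    have e2 : (2 - ε) * ((m : ℝ) / (2 - ε)) = m := by field_simp
    rw [e1, e2, Real.rpow_natCast, Real.rpow_mul hM0, Real.rpow_natCast, ← Real.sqrt_eq_rpow]
    field_simp
  have hGpos : 0 < Real.Gamma ((m : ℝ) / (2 - ε) + 1) := Real.Gamma_pos_of_pos (by positivity)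
  have hG2 : Real.Gamma ((m : ℝ) / (2 - ε) + 1) ≤ Real.Gamma ((m : ℝ) / (2 - ε) + 2) := by
    have : (m : ℝ) / (2 - ε) + 2 = ((m : ℝ) / (2 - ε) + 1) + 1 := by ring
    rw [this, Real.Gamma_add_one (s := (m : ℝ) / (2 - ε) + 1) (by positivity)]
    nlinarith
  have hsub : M ^ (1 - ε / 2) ≤ (N : ℝ) ^ (1 - ε / 2) + (m : ℝ) ^ (1 - ε / 2) := by
    have := NNReal.rpow_add_le_add_rpow (p := 1 - ε / 2) (N : NNReal) (m : NNReal)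
      (by linarith) (by linarith)
    have h := NNReal.coe_le_coe.2 this
    push_cast at h
    rw [hM]; push_cast; exact h
  have hy := young_aux (q := 1 - ε / 2) (D := D) (m := m) (by linarith) (by linarith) hDpos.le
    (by positivity)
  have hexp : Real.exp (M ^ (1 - ε / 2) * D) ≤
      Real.exp C * (Real.exp 1) ^ m * Real.exp ((N : ℝ) ^ (1 - ε / 2) / δ ^ (2 - ε)) := by
    rw [← Real.exp_nat_mul, ← Real.exp_add, ← Real.exp_add, Real.exp_le_exp]
    have : (N : ℝ) ^ (1 - ε / 2) / δ ^ (2 - ε) = (N : ℝ) ^ (1 - ε / 2) * D := by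
      rw [hD]; ring
    rw [this]
    nlinarith
  rw [Real.sqrt_mul (by norm_num), mul_pow, hlhs]
  calc Real.sqrt 2 ^ m * (δ ^ m * (M ^ (1 - ε / 2) * D) ^ ((m : ℝ) / (2 - ε)))
      ≤ Real.sqrt 2 ^ m * (δ ^ m * ((Real.exp C * (Real.exp 1) ^ m *
        Real.exp ((N : ℝ) ^ (1 - ε / 2) / δ ^ (2 - ε))) * Real.Gamma ((m : ℝ) / (2 - ε) + 2))) := by
        gcongr
        refine hG.trans ?_
        gcongr
    _ = _ := by rw [mul_pow, mul_pow]; ring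

/-- Unsigned polynomials with `D^k e^{-x²} = P_k e^{-x²}`. -/
def hP : ℕ → Polynomial ℝ
  | 0 => 1
  | k + 1 => Polynomial.derivative (hP k) - 2 * Polynomial.X * hP k

lemma hP_deriv (k : ℕ) :
    Polynomial.derivative (hP (k + 1)) = -(2 * ((k : Polynomial ℝ) + 1)) * hP k := by
  induction k with
  | zero => simp [hP]
  | succ k ih =>
    have e : hP (k + 1 + 1) = Polynomial.derivative (hP (k + 1)) - 2 * Polynomial.X * hP (k + 1) := rfl
    have e' : hP (k + 1) = Polynomial.derivative (hP k) - 2 * Polynomial.X * hP k := rfl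
    rw [e, Polynomial.derivative_sub, Polynomial.derivative_mul, Polynomial.derivative_mul, ih]
    have h2 : Polynomial.derivative (-(2 * ((k : Polynomial ℝ) + 1)) * hP k)
        = -(2 * ((k : Polynomial ℝ) + 1)) * Polynomial.derivative (hP k) := by
      rw [Polynomial.derivative_mul]; simp
    rw [h2]
    simp only [Polynomial.derivative_ofNat, Polynomial.derivative_X]
    push_cast
    linear_combination (-(2 * ((k : Polynomial ℝ) + 1))) * (-e')

lemma hasDerivAt_poly_gauss (P : Polynomial ℝ) (x : ℝ) :
    HasDerivAt (fun y => P.eval y * Real.exp (-y ^ 2))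
      ((Polynomial.derivative P - 2 * Polynomial.X * P).eval x * Real.exp (-x ^ 2)) x := by
  have h1 := P.hasDerivAt x
  have h2 : HasDerivAt (fun y : ℝ => Real.exp (-y ^ 2)) (Real.exp (-x ^ 2) * (-(2 * x))) x := by
    have := ((hasDerivAt_pow 2 x).neg).exp
    simpa using! this
  have h3 := h1.mul h2
  refine HasDerivAt.congr_deriv h3 ?_
  simp
  ring

lemma iteratedDeriv_gauss (k : ℕ) :
    iteratedDeriv k (fun y : ℝ => Real.exp (-y ^ 2)) = fun x => (hP k).eval x * Real.exp (-x ^ 2) := by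
  induction k with
  | zero => ext x; simp [hP]
  | succ k ih =>
    rw [iteratedDeriv_succ, ih]
    ext x
    exact (hasDerivAt_poly_gauss _ x).deriv

lemma integrable_poly_gauss (P : Polynomial ℝ) :
    Integrable (fun x : ℝ => P.eval x * Real.exp (-x ^ 2)) := by
  induction P using Polynomial.induction_on' with
  | add p q hp hq =>
    refine (hp.add hq).congr (Filter.Eventually.of_forall fun x => ?_)
    simp; ring
  | monomial k a =>
    have h := integrable_rpow_mul_exp_neg_mul_sq (b := 1) one_pos (s := k)
      (by have : (0 : ℝ) ≤ k := by positivity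
          linarith)
    refine (h.const_mul a).congr (Filter.Eventually.of_forall fun x => ?_)
    simp; ring

/-- Gaussian inner products of the polynomials. -/
def hI (k l : ℕ) : ℝ := ∫ x : ℝ, (hP k * hP l).eval x * Real.exp (-x ^ 2)

lemma hI_comm (k l : ℕ) : hI k l = hI l k := by
  unfold hI; rw [mul_comm]

lemma hI_step (k l : ℕ) :
    hI k (l + 1) = - ∫ x : ℝ, (Polynomial.derivative (hP k) * hP l).eval x * Real.exp (-x ^ 2) := by
  have h0 := integral_eq_zero_of_hasDerivAt_of_integrable
    (fun x => hasDerivAt_poly_gauss (hP k * hP l) x) (integrable_poly_gauss _)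
    (integrable_poly_gauss _)
  have e : Polynomial.derivative (hP k * hP l) - 2 * Polynomial.X * (hP k * hP l) =
      Polynomial.derivative (hP k) * hP l + hP k * hP (l + 1) := by
    rw [Polynomial.derivative_mul]; simp only [hP]; ring
  rw [e] at h0
  simp only [Polynomial.eval_add, add_mul] at h0
  rw [integral_add (integrable_poly_gauss _) (integrable_poly_gauss _)] at h0
  unfold hI
  linarith

lemma hI_zero_succ (l : ℕ) : hI 0 (l + 1) = 0 := by
  rw [hI_step]; simp [hP]

lemma hI_succ_succ (k l : ℕ) : hI (k + 1) (l + 1) = 2 * (k + 1) * hI k l := by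
  rw [hI_step, hP_deriv]
  unfold hI
  rw [← integral_const_mul, ← integral_neg]
  congr 1
  ext x
  simp
  ring

lemma hI_zero_zero : hI 0 0 = Real.sqrt Real.pi := by
  have := integral_gaussian 1
  simpa [hI, hP] using this

lemma hI_eq (k l : ℕ) :
    hI k l = if k = l then 2 ^ k * (k.factorial : ℝ) * Real.sqrt Real.pi else 0 := by
  induction k generalizing l with
  | zero =>
    cases l with
    | zero => simp [hI_zero_zero]
    | succ l => simp [hI_zero_succ]
  | succ k ih =>
    cases l with
    | zero => rw [hI_comm, hI_zero_succ]; simp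
    | succ l =>
      rw [hI_succ_succ, ih]
      by_cases h : k = l
      · simp [h, Nat.factorial_succ]; ring
      · simp [h]

/-- Normalisation constant. -/
def hc (k : ℕ) : ℝ := (2 ^ k * (k.factorial : ℝ) * Real.sqrt Real.pi) ^ (-(1/2 : ℝ))

lemma hermite1_eq (k : ℕ) (x : ℝ) :
    hermite1 k x = (-1) ^ k * hc k * ((hP k).eval x * Real.exp (-x ^ 2 / 2)) := by
  unfold hermite1
  rw [iteratedDeriv_gauss]
  have : Real.exp (-x ^ 2 / 2) = Real.exp (x ^ 2 / 2) * Real.exp (- x ^ 2) := by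
    rw [← Real.exp_add]; ring_nf
  rw [this]
  unfold hc
  ring

lemma hc_sq (k : ℕ) : hc k * hc k * (2 ^ k * (k.factorial : ℝ) * Real.sqrt Real.pi) = 1 := by
  unfold hc
  have hp : 0 < 2 ^ k * (k.factorial : ℝ) * Real.sqrt Real.pi := by positivity
  rw [← Real.rpow_add hp]
  norm_num
  rw [Real.rpow_neg_one]
  field_simp

lemma hc_pos (k : ℕ) : 0 < hc k := by unfold hc; positivity

lemma hc_succ (k : ℕ) : hc k = Real.sqrt (2 * (k + 1)) * hc (k + 1) := by
  have h1 := hc_sq k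
  have h2 := hc_sq (k + 1)
  have p1 := hc_pos k
  have p2 := hc_pos (k + 1)
  rw [← Real.sqrt_sq p1.le, ← Real.sqrt_sq p2.le, ← Real.sqrt_mul (by positivity)]
  congr 1
  have hp : 0 < 2 ^ k * (k.factorial : ℝ) * Real.sqrt Real.pi := by positivity
  apply mul_right_cancel₀ hp.ne'
  rw [Nat.factorial_succ] at h2
  push_cast at h2
  linear_combination h1 - h2

lemma hermite1_mul (k l : ℕ) (x : ℝ) : hermite1 k x * hermite1 l x =
    ((-1) ^ k * (-1) ^ l * hc k * hc l) * ((hP k * hP l).eval x * Real.exp (-x ^ 2)) := by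
  rw [hermite1_eq, hermite1_eq]
  have : Real.exp (-x ^ 2) = Real.exp (- x ^ 2 / 2) * Real.exp (- x ^ 2 / 2) := by
    rw [← Real.exp_add]; ring_nf
  rw [this, Polynomial.eval_mul]
  ring

lemma hermite1_integrable (k l : ℕ) : Integrable (fun x => hermite1 k x * hermite1 l x) := by
  simp_rw [hermite1_mul]
  exact (integrable_poly_gauss _).const_mul _

lemma hermite1_orth (k l : ℕ) :
    ∫ x, hermite1 k x * hermite1 l x = if k = l then 1 else 0 := by
  simp_rw [hermite1_mul]
  rw [integral_const_mul]
  have := hI_eq k l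
  unfold hI at this
  rw [this]
  by_cases h : k = l
  · subst h
    have h1 : ((-1 : ℝ)) ^ k * (-1) ^ k = 1 := by rw [← mul_pow]; simp
    simp only [if_true]
    rw [mul_assoc ((-1 : ℝ) ^ k * (-1) ^ k), h1, one_mul, hc_sq]
  · simp [h]

lemma sqrt_aux (k : ℕ) : Real.sqrt (2 * (k + 1)) = 2 * Real.sqrt (((k : ℝ) + 1) / 2) := by
  have : (2 * ((k : ℝ) + 1)) = 2 ^ 2 * (((k : ℝ) + 1) / 2) := by ring
  rw [this, Real.sqrt_mul (by norm_num), Real.sqrt_sq (by norm_num)]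

/-- `φ_k` shifted down, with coefficient `√(k/2)`. -/
lemma hermite1_down (k : ℕ) (x : ℝ) : Real.sqrt ((k : ℝ) / 2) * hermite1 (k - 1) x =
    -(1/2) * ((-1) ^ (k + 1) * hc k * ((Polynomial.derivative (hP k)).eval x * Real.exp (-x ^ 2 / 2))) := by
  cases k with
  | zero => simp [hP]
  | succ k =>
    rw [hP_deriv, Nat.add_sub_cancel, hermite1_eq, hc_succ k, sqrt_aux]
    have hs : Real.sqrt (((k : ℝ) + 1) / 2) * Real.sqrt (((k : ℝ) + 1) / 2) = ((k : ℝ) + 1) / 2 :=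
      Real.mul_self_sqrt (by positivity)
    push_cast
    simp only [Polynomial.eval_mul, Polynomial.eval_neg, Polynomial.eval_add, Polynomial.eval_natCast,
      Polynomial.eval_one, Polynomial.eval_ofNat]
    linear_combination (2 * (-1) ^ k * hc (k + 1) * (hP k).eval x * Real.exp (-x ^ 2 / 2)) * hs

lemma hermite1_up (k : ℕ) (x : ℝ) : Real.sqrt (((k : ℝ) + 1) / 2) * hermite1 (k + 1) x =
    (1/2) * ((-1) ^ (k + 1) * hc k * ((hP (k + 1)).eval x * Real.exp (-x ^ 2 / 2))) := by
  rw [hermite1_eq, hc_succ k, sqrt_aux]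
  ring

lemma hermite1_x (k : ℕ) (x : ℝ) : x * hermite1 k x =
    Real.sqrt (((k : ℝ) + 1) / 2) * hermite1 (k + 1) x +
      Real.sqrt ((k : ℝ) / 2) * hermite1 (k - 1) x := by
  rw [hermite1_up, hermite1_down, hermite1_eq]
  simp [hP]
  ring

lemma hermite1_deriv (k : ℕ) (x : ℝ) : HasDerivAt (hermite1 k)
    (Real.sqrt ((k : ℝ) / 2) * hermite1 (k - 1) x -
      Real.sqrt (((k : ℝ) + 1) / 2) * hermite1 (k + 1) x) x := by
  rw [hermite1_up, hermite1_down]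
  have e : hermite1 k = fun x => (-1) ^ k * hc k * ((hP k).eval x * Real.exp (-x ^ 2 / 2)) := by
    ext x; exact hermite1_eq k x
  rw [e]
  have h2 : HasDerivAt (fun y : ℝ => Real.exp (-y ^ 2 / 2)) (Real.exp (-x ^ 2 / 2) * (-(2 * x) / 2)) x := by
    have := (((hasDerivAt_pow 2 x).neg).div_const 2).exp
    simpa using! this
  have h3 := (((hP k).hasDerivAt x).mul h2).const_mul ((-1) ^ k * hc k)
  refine HasDerivAt.congr_deriv h3 ?_
  simp [hP]
  ring

/-- Real-valued version of the tensorized Hermite function. -/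
def hermR (n : ℕ) (α : Fin n → ℕ) (x : En n) : ℝ := ∏ j, hermite1 (α j) (x j)

lemma hermiteFun_eq (n : ℕ) (α : Fin n → ℕ) (x : En n) :
    hermiteFun n α x = (hermR n α x : ℂ) := by
  simp [hermiteFun, hermR]

lemma hermR_integrable (n : ℕ) (α β : Fin n → ℕ) :
    Integrable (fun x => hermR n α x * hermR n β x) := by
  have h : Integrable (fun x : Fin n → ℝ => ∏ j, (hermite1 (α j) (x j) * hermite1 (β j) (x j))) :=
    Integrable.fintype_prod (f := fun j y => hermite1 (α j) y * hermite1 (β j) y)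
      (fun j => hermite1_integrable _ _)
  have h2 := (PiLp.volume_preserving_ofLp (Fin n)).integrable_comp_of_integrable h
  refine h2.congr (Filter.Eventually.of_forall fun x => ?_)
  simp [hermR, Finset.prod_mul_distrib]

lemma hermR_orth (n : ℕ) (α β : Fin n → ℕ) :
    ∫ x, hermR n α x * hermR n β x = if α = β then 1 else 0 := by
  have h : ∫ x : Fin n → ℝ, ∏ j, (hermite1 (α j) (x j) * hermite1 (β j) (x j)) =
      ∏ j, ∫ y, hermite1 (α j) y * hermite1 (β j) y :=
    integral_fintype_prod_volume_eq_prod (fun j y => hermite1 (α j) y * hermite1 (β j) y)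
  have h2 := (EuclideanSpace.volume_preserving_symm_measurableEquiv_toLp (Fin n)).integral_comp'
    (fun x : Fin n → ℝ => ∏ j, (hermite1 (α j) (x j) * hermite1 (β j) (x j)))
  rw [h] at h2
  have h3 : ∀ x : En n, hermR n α x * hermR n β x =
    ∏ j, (hermite1 (α j) (x j) * hermite1 (β j) (x j)) := fun x => by
      simp [hermR, Finset.prod_mul_distrib]
  simp_rw [h3]
  refine h2.trans ?_
  simp_rw [hermite1_orth]
  by_cases hab : α = β
  · simp [hab]
  · rw [if_neg hab]
    obtain ⟨j, hj⟩ := Function.ne_iff.1 hab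
    exact Finset.prod_eq_zero (Finset.mem_univ j) (by simp [hj])

section sums
variable {ι : Type*} (n : ℕ) (S : Finset ι) (c : ι → ℂ) (g : ι → Fin n → ℕ)

lemma normSq_expand (x : En n) :
    ((‖∑ i ∈ S, c i * hermiteFun n (g i) x‖ ^ 2 : ℝ) : ℂ) =
      ∑ i ∈ S, ∑ k ∈ S, (c i * (starRingEnd ℂ) (c k)) *
        ((hermR n (g i) x * hermR n (g k) x : ℝ) : ℂ) := by
  rw [← Complex.normSq_eq_norm_sq, ← Complex.mul_conj, map_sum, Finset.sum_mul_sum]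
  refine Finset.sum_congr rfl fun i _ => Finset.sum_congr rfl fun k _ => ?_
  rw [hermiteFun_eq, hermiteFun_eq, map_mul, Complex.conj_ofReal]
  push_cast
  ring

lemma expand_integrable (i k : ι) : Integrable (fun x => (c i * (starRingEnd ℂ) (c k)) *
        ((hermR n (g i) x * hermR n (g k) x : ℝ) : ℂ)) :=
  ((hermR_integrable n (g i) (g k)).ofReal).const_mul _

lemma normSq_integrable :
    Integrable (fun x => ‖∑ i ∈ S, c i * hermiteFun n (g i) x‖ ^ 2) := by
  have h : Integrable (fun x => ((‖∑ i ∈ S, c i * hermiteFun n (g i) x‖ ^ 2 : ℝ) : ℂ)) := by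
    simp_rw [normSq_expand]
    exact integrable_finsetSum _ fun i _ => integrable_finsetSum _ fun k _ =>
      expand_integrable n c g i k
  exact h.re

lemma normSq_integral
    (hg : ∀ i ∈ S, ∀ k ∈ S, g i = g k → c i ≠ 0 → c k ≠ 0 → i = k) :
    ∫ x, ‖∑ i ∈ S, c i * hermiteFun n (g i) x‖ ^ 2 = ∑ i ∈ S, ‖c i‖ ^ 2 := by
  classical
  have h : ((∫ x, ‖∑ i ∈ S, c i * hermiteFun n (g i) x‖ ^ 2 : ℝ) : ℂ) =
      ((∑ i ∈ S, ‖c i‖ ^ 2 : ℝ) : ℂ) := by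
    rw [← integral_complex_ofReal]
    simp_rw [normSq_expand]
    rw [integral_finsetSum _ fun i _ => integrable_finsetSum _ fun k _ =>
      expand_integrable n c g i k]
    rw [Complex.ofReal_sum]
    refine Finset.sum_congr rfl fun i hi => ?_
    rw [integral_finsetSum _ fun k _ => expand_integrable n c g i k]
    rw [Finset.sum_eq_single_of_mem i hi]
    · rw [integral_const_mul, integral_complex_ofReal, hermR_orth, Complex.mul_conj,
        Complex.normSq_eq_norm_sq]
      simp
    · intro k hk hki
      rw [integral_const_mul, integral_complex_ofReal, hermR_orth]
      by_cases h1 : c i = 0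
      · simp [h1]
      by_cases h2 : c k = 0
      · simp [h2]
      have : g i ≠ g k := fun h => hki (hg i hi k hk h h1 h2).symm
      simp [this]
  exact_mod_cast h

end sums

lemma hermiteFun_update (n : ℕ) (α : Fin n → ℕ) (j : Fin n) (b : ℕ) (x : En n) :
    hermiteFun n (Function.update α j b) x =
      (hermite1 b (x j) : ℂ) * ∏ i ∈ Finset.univ.erase j, (hermite1 (α i) (x i) : ℂ) := by
  unfold hermiteFun
  rw [← Finset.mul_prod_erase _ _ (Finset.mem_univ j)]
  congr 1
  · simp
  · refine Finset.prod_congr rfl fun i hi => ?_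
    rw [Function.update_of_ne (Finset.ne_of_mem_erase hi)]

/-- raise index `j` -/
def upI {n : ℕ} (j : Fin n) (α : Fin n → ℕ) : Fin n → ℕ := Function.update α j (α j + 1)
/-- lower index `j` -/
def dnI {n : ℕ} (j : Fin n) (α : Fin n → ℕ) : Fin n → ℕ := Function.update α j (α j - 1)
/-- raising coefficient -/
def upC {n : ℕ} (j : Fin n) (α : Fin n → ℕ) : ℝ := Real.sqrt (((α j : ℝ) + 1) / 2)
/-- lowering coefficient -/
def dnC {n : ℕ} (j : Fin n) (α : Fin n → ℕ) : ℝ := Real.sqrt ((α j : ℝ) / 2)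

lemma hermiteFun_split (n : ℕ) (α : Fin n → ℕ) (j : Fin n) (x : En n) :
    hermiteFun n α x =
      (hermite1 (α j) (x j) : ℂ) * ∏ i ∈ Finset.univ.erase j, (hermite1 (α i) (x i) : ℂ) := by
  have := hermiteFun_update n α j (α j) x
  rwa [Function.update_eq_self] at this

lemma mulX_hermite (n : ℕ) (α : Fin n → ℕ) (j : Fin n) (x : En n) :
    (x j : ℂ) * hermiteFun n α x =
      1 * (upC j α : ℂ) * hermiteFun n (upI j α) x + 1 * (dnC j α : ℂ) * hermiteFun n (dnI j α) x := by
  rw [hermiteFun_split n α j, upI, dnI, hermiteFun_update, hermiteFun_update, ← mul_assoc,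
    ← Complex.ofReal_mul, hermite1_x, upC, dnC]
  push_cast
  ring

lemma hermite_hasFDerivAt (n : ℕ) (α : Fin n → ℕ) (x : En n) :
    HasFDerivAt (𝕜 := ℝ) (hermiteFun n α)
      (∑ i, (∏ k ∈ Finset.univ.erase i, (hermite1 (α k) (x k) : ℂ)) •
        (Complex.ofRealCLM.comp ((Real.sqrt ((α i : ℝ) / 2) * hermite1 (α i - 1) (x i) -
      Real.sqrt (((α i : ℝ) + 1) / 2) * hermite1 (α i + 1) (x i)) • (EuclideanSpace.proj i : En n →L[ℝ] ℝ)))) x := by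
  refine HasFDerivAt.finsetProd (g := fun i (x : En n) => (hermite1 (α i) (x i) : ℂ)) fun i _ => ?_
  have h1 : HasFDerivAt (fun x : En n => x i) (EuclideanSpace.proj i : En n →L[ℝ] ℝ) x :=
    (EuclideanSpace.proj i : En n →L[ℝ] ℝ).hasFDerivAt
  have h2 := (hermite1_deriv (α i) (x i)).comp_hasFDerivAt x h1
  exact Complex.ofRealCLM.hasFDerivAt.comp x h2

lemma pderiv_hermite (n : ℕ) (α : Fin n → ℕ) (j : Fin n) (x : En n) :
    pderiv1 j (hermiteFun n α) x =
      (-1) * (upC j α : ℂ) * hermiteFun n (upI j α) x + 1 * (dnC j α : ℂ) * hermiteFun n (dnI j α) x := by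
  unfold pderiv1
  rw [(hermite_hasFDerivAt n α x).fderiv, upI, dnI, hermiteFun_update, hermiteFun_update, upC, dnC]
  rw [ContinuousLinearMap.sum_apply, Finset.sum_eq_single_of_mem j (Finset.mem_univ j)]
  · simp
    ring
  · intro i _ hij
    simp [hij]

lemma mem_hermiteSpan {n N : ℕ} {f : En n → ℂ} (hf : f ∈ hermiteSpan n N) :
    ∃ (S : Finset (Fin n → ℕ)) (c : (Fin n → ℕ) → ℂ), (∀ α ∈ S, ∑ j, α j ≤ N) ∧
      f = fun x => ∑ α ∈ S, c α * hermiteFun n α x := by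
  have h : f ∈ Submodule.span ℂ (hermiteFun n '' {α | ∑ j, α j ≤ N}) := by
    have e : hermiteFun n '' {α | ∑ j, α j ≤ N} =
        {g | ∃ α : Fin n → ℕ, (∑ j, α j) ≤ N ∧ g = hermiteFun n α} := by
      ext g; simp [eq_comm]
    rw [e]; exact hf
  obtain ⟨l, hl, rfl⟩ := (Finsupp.mem_span_image_iff_linearCombination ℂ).1 h
  refine ⟨l.support, l, fun α hα => hl hα, ?_⟩
  ext x
  rw [Finsupp.linearCombination_apply, Finsupp.sum]
  simp

lemma hermite_mem {n N : ℕ} {α : Fin n → ℕ} (h : ∑ j, α j ≤ N) :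
    hermiteFun n α ∈ hermiteSpan n N := Submodule.subset_span ⟨α, h, rfl⟩

lemma sum_upI {n : ℕ} (j : Fin n) (α : Fin n → ℕ) : ∑ i, upI j α i = ∑ i, α i + 1 := by
  rw [upI, Finset.sum_update_of_mem (Finset.mem_univ j),
    ← Finset.add_sum_erase _ _ (Finset.mem_univ j), Finset.sdiff_singleton_eq_erase]
  ring

lemma sum_dnI {n : ℕ} (j : Fin n) (α : Fin n → ℕ) : ∑ i, dnI j α i ≤ ∑ i, α i := by
  rw [dnI, Finset.sum_update_of_mem (Finset.mem_univ j),
    ← Finset.add_sum_erase _ _ (Finset.mem_univ j), Finset.sdiff_singleton_eq_erase]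
  omega

lemma upI_inj {n : ℕ} (j : Fin n) {α β : Fin n → ℕ} (h : upI j α = upI j β) : α = β := by
  ext i
  have := congrFun h i
  unfold upI at this
  by_cases hij : i = j
  · subst hij; simpa using this
  · simpa [hij] using this

lemma dnI_inj {n : ℕ} (j : Fin n) {α β : Fin n → ℕ} (ha : α j ≠ 0) (hb : β j ≠ 0)
    (h : dnI j α = dnI j β) : α = β := by
  ext i
  have := congrFun h i
  unfold dnI at this
  by_cases hij : i = j
  · subst hij
    simp at this
    omega
  · simpa [hij] using this

lemma step_bound {n N : ℕ} (j : Fin n) (S : Finset (Fin n → ℕ)) (c : (Fin n → ℕ) → ℂ)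
    (hS : ∀ α ∈ S, ∑ j, α j ≤ N) (s t : ℂ) (hs : ‖s‖ = 1) (ht : ‖t‖ = 1) (f g : En n → ℂ)
    (hf : f = fun x => ∑ α ∈ S, c α * hermiteFun n α x)
    (hg : g = fun x => ∑ α ∈ S, c α * (s * (upC j α : ℂ) * hermiteFun n (upI j α) x +
      t * (dnC j α : ℂ) * hermiteFun n (dnI j α) x)) :
    g ∈ hermiteSpan n (N + 1) ∧ L2norm n g ≤ Real.sqrt (2 * ((N + 1 : ℕ) : ℝ)) * L2norm n f := by
  constructor
  · have e : g = ∑ α ∈ S, c α • ((s * (upC j α : ℂ)) • hermiteFun n (upI j α) +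
      (t * (dnC j α : ℂ)) • hermiteFun n (dnI j α)) := by
      rw [hg]; ext x; simp [mul_add]
    rw [e]
    refine Submodule.sum_mem _ fun α hα => Submodule.smul_mem _ _ (Submodule.add_mem _
      (Submodule.smul_mem _ _ (hermite_mem ?_)) (Submodule.smul_mem _ _ (hermite_mem ?_)))
    · rw [sum_upI]; have := hS α hα; omega
    · have := sum_dnI j α; have := hS α hα; omega
  · have hle : ∀ α ∈ S, (α j : ℝ) ≤ N := fun α hα => by
      have h1 := hS α hα
      have h2 : α j ≤ ∑ i, α i := Finset.single_le_sum (fun _ _ => Nat.zero_le _) (Finset.mem_univ j)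
      exact_mod_cast h2.trans h1
    unfold L2norm
    rw [← Real.sqrt_mul (by positivity)]
    apply Real.sqrt_le_sqrt
    rw [hf, normSq_integral n S c (fun α => α) (fun i _ k _ h _ _ => h)]
    have iU := normSq_integrable n S (fun α => c α * (s * (upC j α : ℂ))) (upI j)
    have iD := normSq_integrable n S (fun α => c α * (t * (dnC j α : ℂ))) (dnI j)
    have eU := normSq_integral n S (fun α => c α * (s * (upC j α : ℂ))) (upI j)
      (fun i _ k _ h _ _ => upI_inj j h)
    have eD := normSq_integral n S (fun α => c α * (t * (dnC j α : ℂ))) (dnI j)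
      (fun i _ k _ h h1 h2 => dnI_inj j (fun h0 => h1 (by simp [dnC, h0]))
        (fun h0 => h2 (by simp [dnC, h0])) h)
    have hmono : ∫ x, ‖g x‖ ^ 2 ≤
      ∫ x, (2 * ‖∑ α ∈ S, c α * (s * (upC j α : ℂ)) * hermiteFun n (upI j α) x‖ ^ 2 +
        2 * ‖∑ α ∈ S, c α * (t * (dnC j α : ℂ)) * hermiteFun n (dnI j α) x‖ ^ 2) := by
      apply integral_mono_of_nonneg
      · exact Filter.Eventually.of_forall fun x => by positivity
      · exact (iU.const_mul 2).add (iD.const_mul 2)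
      · refine Filter.Eventually.of_forall fun x => ?_
        have e : g x = ∑ α ∈ S, c α * (s * (upC j α : ℂ)) * hermiteFun n (upI j α) x +
            ∑ α ∈ S, c α * (t * (dnC j α : ℂ)) * hermiteFun n (dnI j α) x := by
          rw [hg, ← Finset.sum_add_distrib]
          refine Finset.sum_congr rfl fun α _ => ?_
          ring
        simp only [e]
        have h1 := norm_add_le (∑ α ∈ S, c α * (s * (upC j α : ℂ)) * hermiteFun n (upI j α) x)
          (∑ α ∈ S, c α * (t * (dnC j α : ℂ)) * hermiteFun n (dnI j α) x)
        refine (pow_le_pow_left₀ (norm_nonneg _) h1 2).trans ?_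
        nlinarith [sq_nonneg (‖∑ α ∈ S, c α * (s * (upC j α : ℂ)) * hermiteFun n (upI j α) x‖ -
          ‖∑ α ∈ S, c α * (t * (dnC j α : ℂ)) * hermiteFun n (dnI j α) x‖)]
    rw [integral_add (iU.const_mul 2) (iD.const_mul 2), integral_const_mul, integral_const_mul,
      eU, eD] at hmono
    refine hmono.trans ?_
    rw [Finset.mul_sum, Finset.mul_sum, Finset.mul_sum, ← Finset.sum_add_distrib]
    refine Finset.sum_le_sum fun α hα => ?_
    have hl := hle α hα
    have hu2 : ‖(upC j α : ℂ)‖ ^ 2 = ((α j : ℝ) + 1) / 2 := by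
      rw [Complex.norm_real, Real.norm_eq_abs, sq_abs, upC, Real.sq_sqrt (by positivity)]
    have hd2 : ‖(dnC j α : ℂ)‖ ^ 2 = (α j : ℝ) / 2 := by
      rw [Complex.norm_real, Real.norm_eq_abs, sq_abs, dnC, Real.sq_sqrt (by positivity)]
    rw [norm_mul, norm_mul, norm_mul, norm_mul, hs, ht, one_mul, one_mul, mul_pow, mul_pow, hu2, hd2]
    push_cast
    nlinarith [sq_nonneg ‖c α‖]

/-- `g` is obtained from `f` by `m` elementary steps, total degrees staying below `T`. -/
def Chn (n T m : ℕ) (f g : En n → ℂ) : Prop :=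
  ∀ N, N + m ≤ T → f ∈ hermiteSpan n N →
    g ∈ hermiteSpan n (N + m) ∧ L2norm n g ≤ (Real.sqrt (2 * (T : ℝ))) ^ m * L2norm n f

lemma Chn.refl (n T : ℕ) (f : En n → ℂ) : Chn n T 0 f f := fun N _ hf => ⟨hf, by simp⟩

lemma Chn.trans {n T m m' : ℕ} {f g h : En n → ℂ} (h1 : Chn n T m f g) (h2 : Chn n T m' g h) :
    Chn n T (m + m') f h := by
  intro N hN hf
  obtain ⟨a, b⟩ := h1 N (by omega) hf
  obtain ⟨a', b'⟩ := h2 (N + m) (by omega) a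
  refine ⟨by rwa [← add_assoc], b'.trans ?_⟩
  rw [pow_add]
  calc _ ≤ (Real.sqrt (2 * (T : ℝ))) ^ m' * ((Real.sqrt (2 * (T : ℝ))) ^ m * L2norm n f) := by
        gcongr
    _ = _ := by ring

lemma Chn.of_step {n T : ℕ} {f g : En n → ℂ} (h : ∀ N, f ∈ hermiteSpan n N →
    g ∈ hermiteSpan n (N + 1) ∧ L2norm n g ≤ Real.sqrt (2 * ((N + 1 : ℕ) : ℝ)) * L2norm n f) :
    Chn n T 1 f g := by
  intro N hN hf
  obtain ⟨a, b⟩ := h N hf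
  refine ⟨a, b.trans ?_⟩
  rw [pow_one]
  have : ((N + 1 : ℕ) : ℝ) ≤ T := by exact_mod_cast hN
  have h0 : 0 ≤ L2norm n f := Real.sqrt_nonneg _
  gcongr

lemma chn_mulX {n T : ℕ} (j : Fin n) (f : En n → ℂ) :
    Chn n T 1 f (fun x => (x j : ℂ) * f x) := by
  apply Chn.of_step
  intro N hf
  obtain ⟨S, c, hS, rfl⟩ := mem_hermiteSpan hf
  refine step_bound j S c hS 1 1 (by simp) (by simp) _ _ rfl ?_
  ext x
  rw [Finset.mul_sum]
  refine Finset.sum_congr rfl fun α _ => ?_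
  rw [← mulX_hermite]; ring

lemma chn_pderiv {n T : ℕ} (j : Fin n) (f : En n → ℂ) :
    Chn n T 1 f (pderiv1 j f) := by
  apply Chn.of_step
  intro N hf
  obtain ⟨S, c, hS, rfl⟩ := mem_hermiteSpan hf
  refine step_bound j S c hS (-1) 1 (by simp) (by simp) _ _ rfl ?_
  ext x
  have h : HasFDerivAt (𝕜 := ℝ) (fun x => ∑ α ∈ S, c α * hermiteFun n α x)
      (∑ α ∈ S, c α • fderiv ℝ (hermiteFun n α) x) x := by
    refine HasFDerivAt.fun_sum fun α _ => ?_
    exact ((hermite_hasFDerivAt n α x).differentiableAt.hasFDerivAt).const_mul (c α)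
  unfold pderiv1
  rw [h.fderiv, ContinuousLinearMap.sum_apply]
  refine Finset.sum_congr rfl fun α _ => ?_
  rw [← pderiv_hermite]
  rfl

lemma chn_iter {n T : ℕ} (j : Fin n) (k : ℕ) (f : En n → ℂ) :
    Chn n T k f ((pderiv1 j)^[k] f) := by
  induction k with
  | zero => exact Chn.refl n T f
  | succ k ih =>
    rw [Function.iterate_succ_apply']
    exact ih.trans (chn_pderiv j _)

lemma chn_foldr {n T : ℕ} (β : Fin n → ℕ) (f : En n → ℂ) (l : List (Fin n)) :
    Chn n T (l.map β).sum f (l.foldr (fun j g => (pderiv1 j)^[β j] g) f) := by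
  induction l with
  | nil => exact Chn.refl n T f
  | cons j l ih =>
    rw [List.map_cons, List.sum_cons, List.foldr_cons, add_comm]
    exact ih.trans (chn_iter j _ _)

lemma chn_pow {n T : ℕ} (j : Fin n) (k : ℕ) (f : En n → ℂ) :
    Chn n T k f (fun x => (x j : ℂ) ^ k * f x) := by
  induction k with
  | zero => simpa using! Chn.refl n T f
  | succ k ih =>
    have := ih.trans (chn_mulX j _)
    convert this using 2
    ring

lemma chn_prod {n T : ℕ} (α : Fin n → ℕ) (f : En n → ℂ) (s : Finset (Fin n)) :
    Chn n T (∑ j ∈ s, α j) f (fun x => (∏ j ∈ s, (x j : ℂ) ^ α j) * f x) := by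
  classical
  induction s using Finset.induction_on with
  | empty => simpa using! Chn.refl n T f
  | insert j s hj ih =>
    have := ih.trans (chn_pow j (α j) _)
    rw [Finset.sum_insert hj, add_comm]
    convert this using 2
    rw [Finset.prod_insert hj]
    ring

lemma chn_all {n T : ℕ} (α β : Fin n → ℕ) (f : En n → ℂ) :
    Chn n T ((∑ j, α j) + ∑ j, β j) f (fun x => (monomial n α x : ℂ) * pderivMulti β f x) := by
  have h1 := chn_foldr (T := T) β f (List.finRange n)
  have h2 := chn_prod (T := T) α (pderivMulti β f) Finset.univ
  have e : ((List.finRange n).map β).sum = ∑ j, β j := by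
    rw [← List.ofFn_eq_map, List.sum_ofFn]
  rw [e] at h1
  have := h1.trans h2
  rw [add_comm]
  simpa [monomial] using! this

/-- **Bernstein type estimates (Proposition "prop1", first estimate)**. -/
theorem bernstein_estimate_monomial (n : ℕ) (ε : ℝ) (hε : 0 < ε) (hε1 : ε ≤ 1) :
    ∃ K : ℝ, 1 < K ∧ ∀ δ : ℝ, 0 < δ → δ ≤ 1 → ∃ Kt : ℝ, 1 < Kt ∧
      ∀ (α β : Fin n → ℕ) (N : ℕ), ∀ f ∈ hermiteSpan n N,
        L2norm n (fun x => (monomial n α x : ℂ) * pderivMulti β f x) ≤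
          Kt * (δ * K) ^ ((∑ j, α j) + (∑ j, β j)) *
            Real.Gamma ((((∑ j, α j) + (∑ j, β j) : ℕ) : ℝ) / (2 - ε) + 2) *
            Real.exp ((N : ℝ) ^ (1 - ε / 2) / δ ^ (2 - ε)) * L2norm n f := by
  obtain ⟨K, hK, h⟩ := numeric_bound ε hε hε1
  refine ⟨K, hK, fun δ hδ hδ1 => ?_⟩
  obtain ⟨Kt, hKt, h⟩ := h δ hδ hδ1
  refine ⟨Kt, hKt, fun α β N f hf => ?_⟩
  have h1 := (chn_all (T := N + ((∑ j, α j) + ∑ j, β j)) α β f N le_rfl hf).2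
  refine h1.trans (mul_le_mul_of_nonneg_right (h _ N) (Real.sqrt_nonneg _))

end
end

section
/- For every r > 0 and all real numbers x, y ≥ r, one has Γ(x)Γ(y) ≤ (1/(2r)) B(r,r) Γ(x+y+1). -/
noncomputable section

/-- The real Beta function B(x,y) = ∫₀¹ t^{x-1}(1-t)^{y-1} dt. -/
def realBeta (x y : ℝ) : ℝ := ∫ t in (0:ℝ)..1, t ^ (x - 1) * (1 - t) ^ (y - 1)

theorem cplx_integrand_eq (x y t : ℝ) (h0 : 0 ≤ t) (h1 : t ≤ 1) :
    (t : ℂ) ^ ((x : ℂ) - 1) * (1 - (t : ℂ)) ^ ((y : ℂ) - 1)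
      = ((t ^ (x - 1) * (1 - t) ^ (y - 1) : ℝ) : ℂ) := by
  rw [Complex.ofReal_mul, Complex.ofReal_cpow h0, Complex.ofReal_cpow (by linarith)]
  push_cast
  rfl

theorem realBeta_integrable {x y : ℝ} (hx : 0 < x) (hy : 0 < y) :
    MeasureTheory.IntegrableOn (fun t : ℝ => t ^ (x - 1) * (1 - t) ^ (y - 1))
      (Set.Ioc 0 1) := by
  have h := Complex.betaIntegral_convergent (u := x) (v := y) (by simpa) (by simpa)
  rw [intervalIntegrable_iff_integrableOn_Ioc_of_le (by simp)] at h
  have h2 : MeasureTheory.IntegrableOn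
      (fun t : ℝ => ((t ^ (x - 1) * (1 - t) ^ (y - 1) : ℝ) : ℂ)) (Set.Ioc 0 1) :=
    h.congr_fun (fun t ht => cplx_integrand_eq x y t ht.1.le ht.2) measurableSet_Ioc
  unfold MeasureTheory.IntegrableOn
  simpa using MeasureTheory.Integrable.re h2

theorem realBeta_eq {x y : ℝ} (hx : 0 < x) (hy : 0 < y) :
    Real.Gamma x * Real.Gamma y = realBeta x y * Real.Gamma (x + y) := by
  have h := Complex.Gamma_mul_Gamma_eq_betaIntegral (s := x) (t := y) (by simpa) (by simpa)
  have h2 : Complex.betaIntegral x y = (realBeta x y : ℂ) := by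
    unfold Complex.betaIntegral realBeta
    rw [← intervalIntegral.integral_ofReal]
    apply intervalIntegral.integral_congr
    intro t ht
    rw [Set.uIcc_of_le zero_le_one] at ht
    exact cplx_integrand_eq x y t ht.1 ht.2
  rw [h2, ← Complex.ofReal_add, Complex.Gamma_ofReal, Complex.Gamma_ofReal,
    Complex.Gamma_ofReal] at h
  rw [mul_comm (realBeta x y)]
  exact_mod_cast h

theorem realBeta_anti {r x y : ℝ} (hr : 0 < r) (hx : r ≤ x) (hy : r ≤ y) :
    realBeta x y ≤ realBeta r r := by
  unfold realBeta
  rw [intervalIntegral.integral_of_le zero_le_one, intervalIntegral.integral_of_le zero_le_one,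
    MeasureTheory.integral_Ioc_eq_integral_Ioo, MeasureTheory.integral_Ioc_eq_integral_Ioo]
  refine MeasureTheory.setIntegral_mono_on
    ((realBeta_integrable (hr.trans_le hx) (hr.trans_le hy)).mono_set Set.Ioo_subset_Ioc_self)
    ((realBeta_integrable hr hr).mono_set Set.Ioo_subset_Ioc_self) measurableSet_Ioo ?_
  intro t ht
  have h1 : 0 < 1 - t := by linarith [ht.2]
  exact mul_le_mul
    (Real.rpow_le_rpow_of_exponent_ge ht.1 ht.2.le (by linarith))
    (Real.rpow_le_rpow_of_exponent_ge h1 (by linarith [ht.1]) (by linarith))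
    (Real.rpow_nonneg h1.le _) (Real.rpow_nonneg ht.1.le _)

/-- **Lemma "gamma3" (ii)**: Γ(x)Γ(y) ≤ (1/(2r)) B(r,r) Γ(x+y+1) for x, y ≥ r > 0. -/
theorem gamma_mul_gamma_le (r x y : ℝ) (hr : 0 < r) (hx : r ≤ x) (hy : r ≤ y) :
    Real.Gamma x * Real.Gamma y ≤
      1 / (2 * r) * realBeta r r * Real.Gamma (x + y + 1) := by
  have hx0 : 0 < x := hr.trans_le hx
  have hy0 : 0 < y := hr.trans_le hy
  have hG : 0 < Real.Gamma (x + y) := Real.Gamma_pos_of_pos (by linarith)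
  have hB : 0 ≤ realBeta r r := by
    have h := realBeta_eq hr hr
    have h1 := Real.Gamma_pos_of_pos hr
    have h2 : 0 < Real.Gamma (r + r) := Real.Gamma_pos_of_pos (by linarith)
    have h3 : 0 < realBeta r r * Real.Gamma (r + r) := h ▸ mul_pos h1 h1
    exact (pos_of_mul_pos_left h3 h2.le).le
  have h1 : 1 ≤ 1 / (2 * r) * (x + y) := by
    rw [one_div_mul_eq_div, le_div_iff₀ (by linarith)]
    linarith
  rw [realBeta_eq hx0 hy0, Real.Gamma_add_one (by linarith)]
  calc realBeta x y * Real.Gamma (x + y)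
      ≤ realBeta r r * Real.Gamma (x + y) :=
        mul_le_mul_of_nonneg_right (realBeta_anti hr hx hy) hG.le
    _ ≤ (1 / (2 * r) * (x + y)) * (realBeta r r * Real.Gamma (x + y)) :=
        le_mul_of_one_le_left (mul_nonneg hB hG.le) h1
    _ = _ := by ring

end
end

section
/- For every real r ≥ 1 there exists a constant C_r > 0 such that for all real x ≥ 1, Γ(x)^r ≤ C_r Γ(rx). -/
noncomputable section

/-- **Lemma "gamma3" (iii)**: for r ≥ 1 there is C_r > 0 with Γ(x)^r ≤ C_r Γ(rx) for x ≥ 1. -/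
theorem gamma_pow_le (r : ℝ) (hr : 1 ≤ r) :
    ∃ C : ℝ, 0 < C ∧ ∀ x : ℝ, 1 ≤ x →
      Real.Gamma x ^ r ≤ C * Real.Gamma (r * x) := by
  obtain ⟨m, hm, hmin⟩ := Real.exists_isMinOn_Gamma_Ioi
  have hmpos : 0 < Real.Gamma m := Real.Gamma_pos_of_pos (by linarith [hm.1])
  have hr0 : 0 < r := by linarith
  refine ⟨1 + (Real.Gamma m)⁻¹, by positivity, fun x hx => ?_⟩
  have hrx : 0 < r * x := by positivity
  have hG : 0 < Real.Gamma (r * x) := Real.Gamma_pos_of_pos hrx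
  have hx0 : 0 < Real.Gamma x := Real.Gamma_pos_of_pos (by linarith)
  have hge : Real.Gamma m ≤ Real.Gamma (r * x) := hmin (Set.mem_Ioi.2 hrx)
  have hI : 0 ≤ (Real.Gamma m)⁻¹ * Real.Gamma (r * x) := by positivity
  rcases le_total x 2 with h2 | h2
  · have h1 : Real.Gamma x ≤ 1 := by
      have := Real.convexOn_Gamma.2 (Set.mem_Ioi.2 (one_pos : (0:ℝ) < 1))
        (Set.mem_Ioi.2 (two_pos : (0:ℝ) < 2))
        (by linarith : 0 ≤ 2 - x) (by linarith : 0 ≤ x - 1) (by ring)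
      simp only [smul_eq_mul, Real.Gamma_one, Real.Gamma_two] at this
      have e : (2 - x) * 1 + (x - 1) * 2 = x := by ring
      rw [e] at this
      linarith
    have h3 : Real.Gamma x ^ r ≤ 1 := Real.rpow_le_one hx0.le h1 hr0.le
    have h4 : 1 ≤ (Real.Gamma m)⁻¹ * Real.Gamma (r * x) := by
      rw [inv_mul_eq_div, le_div_iff₀ hmpos]; linarith
    nlinarith
  · have hd : r⁻¹ ≤ 1 := inv_le_one_of_one_le₀ hr
    have hmono : Real.Gamma x ≤ Real.Gamma (x + (1 - r⁻¹)) :=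
      Real.Gamma_strictMonoOn_Ici.monotoneOn (Set.mem_Ici.2 h2)
        (Set.mem_Ici.2 (by linarith)) (by linarith)
    have hconv := Real.convexOn_log_Gamma.2 (Set.mem_Ioi.2 hrx)
        (Set.mem_Ioi.2 (one_pos : (0:ℝ) < 1))
        (by positivity : 0 ≤ r⁻¹) (by linarith : 0 ≤ 1 - r⁻¹) (by ring)
    have e : r⁻¹ * (r * x) + (1 - r⁻¹) * 1 = x + (1 - r⁻¹) := by field_simp
    simp only [smul_eq_mul, Function.comp, Real.Gamma_one, Real.log_one, mul_zero, add_zero,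
      e] at hconv
    have hlog := (Real.log_le_log hx0 hmono).trans hconv
    have : Real.Gamma x ^ r ≤ Real.Gamma (r * x) := by
      rw [← Real.log_le_log_iff (by positivity) hG, Real.log_rpow hx0]
      calc r * Real.log (Real.Gamma x) ≤ r * (r⁻¹ * Real.log (Real.Gamma (r * x))) := by gcongr
        _ = _ := by field_simp
    nlinarith

end
end

section
/- Let ρ_1, ρ_2 : ℝ^n → (0,∞) be continuous positive functions with ρ_1(x) ≤ ρ_2(x) for all x ∈ ℝ^n. If ω ⊂ ℝ^n is a measurable subset which is γ-thick with respect to the density ρ_1 for some γ with 1 − 6^{−n} < γ ≤ 1, then ω is γ̃-thick with respect to the density ρ_2, where γ̃ = 1 − (1−γ)6^n > 0; that is, |ω ∩ B(x, ρ_2(x))| ≥ (1 − (1−γ)6^n) |B(x, ρ_2(x))| for every x ∈ ℝ^n. -/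
open MeasureTheory
open scoped BigOperators ENNReal NNReal

noncomputable section

/-- γ-thickness with respect to a density ρ. -/
def ThickWith (n : ℕ) (γ : ℝ) (ρ : En n → ℝ) (ω : Set (En n)) : Prop :=
  ∀ x : En n,
    ENNReal.ofReal γ * volume (Metric.ball x (ρ x)) ≤ volume (ω ∩ Metric.ball x (ρ x))

/-- Thickness in one ball controls the complement. -/
theorem compl_le_of_thick {n : ℕ} {γ : ℝ} (h0 : 0 ≤ γ) {ω : Set (En n)}
    (hω : MeasurableSet ω) {x : En n} {r : ℝ}
    (h : ENNReal.ofReal γ * volume (Metric.ball x r) ≤ volume (ω ∩ Metric.ball x r)) :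
    volume (Metric.ball x r \ ω) ≤ ENNReal.ofReal (1 - γ) * volume (Metric.ball x r) := by
  have hfin : volume (Metric.ball x r) ≠ ⊤ := measure_ball_lt_top.ne
  have hs := measure_inter_add_sdiff (μ := volume) (Metric.ball x r) hω
  rw [Set.inter_comm] at hs
  rw [ENNReal.ofReal_sub _ h0, ENNReal.ofReal_one, ENNReal.sub_mul (fun _ _ => hfin), one_mul]
  have h2 : volume (Metric.ball x r \ ω)
      = volume (Metric.ball x r) - volume (ω ∩ Metric.ball x r) := by
    apply ENNReal.eq_sub_of_add_eq
    · exact measure_ne_top_of_subset Set.inter_subset_right hfin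
    · rw [add_comm]; exact hs
  rw [h2]
  exact tsub_le_tsub_left h _

/-- Control of the complement gives thickness in one ball. -/
theorem thick_of_compl_le {n : ℕ} {δ : ℝ} (h0 : 0 ≤ δ) {ω : Set (En n)}
    (hω : MeasurableSet ω) {x : En n} {r : ℝ}
    (h : volume (Metric.ball x r \ ω) ≤ ENNReal.ofReal δ * volume (Metric.ball x r)) :
    ENNReal.ofReal (1 - δ) * volume (Metric.ball x r) ≤ volume (ω ∩ Metric.ball x r) := by
  have hfin : volume (Metric.ball x r) ≠ ⊤ := measure_ball_lt_top.ne
  have hs := measure_inter_add_sdiff (μ := volume) (Metric.ball x r) hω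
  rw [Set.inter_comm] at hs
  rw [ENNReal.ofReal_sub _ h0, ENNReal.ofReal_one, ENNReal.sub_mul (fun _ _ => hfin), one_mul]
  rw [tsub_le_iff_right]
  calc volume (Metric.ball x r) = _ := hs.symm
    _ ≤ _ := by gcongr

/-- Scaling of balls. -/
theorem vol_ball_scale {n : ℕ} (x y : En n) {c r : ℝ} (hc : 0 < c) :
    volume (Metric.ball x (c * r)) = ENNReal.ofReal (c ^ n) * volume (Metric.ball y r) := by
  have h := Measure.addHaar_ball_mul_of_pos (volume : Measure (En n)) x hc r
  rw [h, finrank_euclideanSpace_fin, Measure.addHaar_ball_center volume y r]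

/-- Covering argument. -/
theorem compl_covering {n : ℕ} {ρ : En n → ℝ} (hc : Continuous ρ) (hpos : ∀ x, 0 < ρ x)
    {ω : Set (En n)} {ε : ℝ≥0∞}
    (h : ∀ y, volume (Metric.ball y (ρ y) \ ω) ≤ ε * volume (Metric.ball y (ρ y)))
    (x : En n) (R : ℝ) (hR : 0 < R) (hx : ρ x ≤ R) :
    volume (Metric.ball x R \ ω) ≤ ε * (ENNReal.ofReal (6 ^ n) * volume (Metric.ball x R)) := by
  by_cases hbig : ∃ y ∈ Metric.ball x R, 2 * R ≤ ρ y
  · obtain ⟨y, hy, hyR⟩ := hbig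
    obtain ⟨z, hz, hzR⟩ := (convex_ball x R).isPreconnected.intermediate_value
      (Metric.mem_ball_self hR) hy hc.continuousOn
      (show 2 * R ∈ Set.Icc (ρ x) (ρ y) from ⟨by linarith, hyR⟩)
    have hsub : Metric.ball x R ⊆ Metric.ball z (2 * R) := by
      apply Metric.ball_subset_ball'
      rw [Metric.mem_ball, dist_comm] at hz
      linarith
    have hz' := h z
    rw [hzR] at hz'
    calc volume (Metric.ball x R \ ω) ≤ volume (Metric.ball z (2 * R) \ ω) :=
          measure_mono (Set.sdiff_subset_sdiff_left hsub)
      _ ≤ _ := hz'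
      _ = ε * (ENNReal.ofReal (2 ^ n) * volume (Metric.ball x R)) := by
          rw [vol_ball_scale z x two_pos]
      _ ≤ _ := by gcongr; norm_num
  · push Not at hbig
    obtain ⟨u, hut, hdisj, hcov⟩ := Vitali.exists_disjoint_subfamily_covering_enlargement
      (fun y => Metric.ball y (ρ y / 3)) (Metric.ball x R) ρ 2 one_lt_two
      (fun a _ => (hpos a).le) (2 * R) (fun a ha => (hbig a ha).le)
      (fun a _ => ⟨a, Metric.mem_ball_self (by have := hpos a; positivity)⟩)
    have hcount : u.Countable := hdisj.countable_of_isOpen (fun _ _ => Metric.isOpen_ball)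
      (fun a _ => ⟨a, Metric.mem_ball_self (by have := hpos a; positivity)⟩)
    have hsub : Metric.ball x R \ ω ⊆ ⋃ b ∈ u, (Metric.ball b (ρ b) \ ω) := by
      rintro y ⟨hy, hyω⟩
      obtain ⟨b, hb, ⟨w, hw1, hw2⟩, hle⟩ := hcov y hy
      simp only [Set.mem_iUnion]
      refine ⟨b, hb, ?_, hyω⟩
      rw [Metric.mem_ball] at *
      have := dist_triangle_left y b w
      linarith
    have hsum : ∑' b : u, volume (Metric.ball (b : En n) (ρ b / 3))
        ≤ volume (Metric.ball x (2 * R)) := by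
      rw [← measure_biUnion hcount hdisj (fun _ _ => measurableSet_ball)]
      apply measure_mono
      apply Set.iUnion₂_subset
      intro b hb
      apply Metric.ball_subset_ball'
      have h1 := hbig b (hut hb)
      have h2 := hut hb
      rw [Metric.mem_ball] at h2
      linarith
    calc volume (Metric.ball x R \ ω) ≤ _ := measure_mono hsub
      _ ≤ ∑' b : u, volume (Metric.ball (b : En n) (ρ b) \ ω) := measure_biUnion_le _ hcount _
      _ ≤ ∑' b : u, ε * (ENNReal.ofReal (3 ^ n) * volume (Metric.ball (b : En n) (ρ b / 3))) := by
          refine ENNReal.tsum_le_tsum fun b => (h b).trans_eq ?_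
          rw [← vol_ball_scale (b : En n) (b : En n) three_pos, mul_div_cancel₀ _ three_ne_zero]
      _ = ε * (ENNReal.ofReal (3 ^ n) *
            ∑' b : u, volume (Metric.ball (b : En n) (ρ b / 3))) := by
          rw [ENNReal.tsum_mul_left, ENNReal.tsum_mul_left]
      _ ≤ ε * (ENNReal.ofReal (3 ^ n) * volume (Metric.ball x (2 * R))) := by gcongr
      _ = _ := by
          rw [vol_ball_scale x x two_pos, ← mul_assoc (ENNReal.ofReal (3 ^ n)),
            ← ENNReal.ofReal_mul (by positivity), ← mul_pow]
          norm_num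

/-- **Lemma "thick_comparison"**: if ω is γ-thick with respect to ρ₁ with
1 - 6^{-n} < γ ≤ 1 and ρ₁ ≤ ρ₂, then ω is (1-(1-γ)6^n)-thick with respect to ρ₂. -/
theorem thick_comparison (n : ℕ) (ρ₁ ρ₂ : En n → ℝ)
    (hρ₁cont : Continuous ρ₁) (hρ₂cont : Continuous ρ₂)
    (hρ₁pos : ∀ x, 0 < ρ₁ x) (hρ₂pos : ∀ x, 0 < ρ₂ x)
    (hle : ∀ x, ρ₁ x ≤ ρ₂ x)
    (ω : Set (En n)) (hω : MeasurableSet ω)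
    (γ : ℝ) (hγ : 1 - 1 / 6 ^ n < γ) (hγ1 : γ ≤ 1)
    (hthick : ThickWith n γ ρ₁ ω) :
    0 < 1 - (1 - γ) * 6 ^ n ∧ ThickWith n (1 - (1 - γ) * 6 ^ n) ρ₂ ω := by
  have h6 : (1 : ℝ) ≤ 6 ^ n := one_le_pow₀ (by norm_num)
  have h6' : (1 : ℝ) / 6 ^ n ≤ 1 := by rw [div_le_one (by positivity)]; exact h6
  have hγ0 : 0 ≤ γ := by linarith
  have hp : (1 - γ) * 6 ^ n < 1 := by
    rw [← lt_div_iff₀ (by positivity)]; linarith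
  refine ⟨by linarith, fun x => ?_⟩
  have hδ : 0 ≤ (1 - γ) * 6 ^ n := mul_nonneg (by linarith) (by positivity)
  apply thick_of_compl_le hδ hω
  rw [ENNReal.ofReal_mul (by linarith), mul_assoc]
  exact compl_covering hρ₁cont hρ₁pos (fun y => compl_le_of_thick hγ0 hω (hthick y)) x _
    (hρ₂pos x) (hle x)

end
end

section
/- For every k ∈ ℕ there exists a finite family of real numbers (C^k_{l_1,l_2}) indexed by l_1, l_2 ∈ ℕ with 0 ≤ l_1 + l_2 ≤ k+1 such that, for every smooth function f : ℝ → ℂ and every x ∈ ℝ, ( ((−1)^0 d/dx + x) ∘ ((−1)^1 d/dx + x) ∘ ⋯ ∘ ((−1)^k d/dx + x) ) f (x) = Σ_{0 ≤ l_1+l_2 ≤ k+1} C^k_{l_1,l_2} x^{l_1} f^{(l_2)}(x), and moreover |C^k_{l_1,l_2}| ≤ 3^k (k+1)^{(k+1−l_1−l_2)/2} for all 0 ≤ l_1 + l_2 ≤ k+1. -/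
open scoped BigOperators

noncomputable section

/-- The first order operator A_j = (-1)^j d/dx + x (multiplication by x). -/
def creAnnOp (j : ℕ) (g : ℝ → ℂ) : ℝ → ℂ :=
  fun y => ((-1 : ℂ)) ^ j * deriv g y + (y : ℂ) * g y

/-- Coefficients of the normally ordered expansion of the product of the first n factors. -/
def caCoef : ℕ → ℕ → ℕ → ℝ
  | 0, a, b => if a = 0 ∧ b = 0 then 1 else 0
  | n + 1, a, b => (-1) ^ n * (if b = 0 then 0 else caCoef n a (b - 1))
      + (if a = 0 then 0 else caCoef n (a - 1) b) + ((b : ℝ) + 1) * caCoef n a (b + 1)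

lemma caCoef_support (n : ℕ) : ∀ a b : ℕ, n < a + b → caCoef n a b = 0 := by
  induction n with
  | zero => intro a b h; simp only [caCoef]; rw [if_neg]; omega
  | succ n ih =>
    intro a b h
    simp only [caCoef]
    rw [ih a (b + 1) (by omega)]
    have h1 : (if b = 0 then 0 else caCoef n a (b - 1)) = 0 := by
      split_ifs with hb
      · rfl
      · exact ih _ _ (by omega)
    have h2 : (if a = 0 then 0 else caCoef n (a - 1) b) = 0 := by
      split_ifs with hb
      · rfl
      · exact ih _ _ (by omega)
    rw [h1, h2]; simp

lemma caCoef_bound (k : ℕ) : ∀ a b : ℕ, a + b ≤ k + 1 →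
    |caCoef (k + 1) a b| ≤ 3 ^ k * ((k : ℝ) + 1) ^ (((k : ℝ) + 1 - a - b) / 2) := by
  induction k with
  | zero =>
    intro a b h
    have : (a = 0 ∧ b = 0) ∨ (a = 1 ∧ b = 0) ∨ (a = 0 ∧ b = 1) := by omega
    rcases this with ⟨rfl, rfl⟩ | ⟨rfl, rfl⟩ | ⟨rfl, rfl⟩ <;> simp [caCoef]
  | succ k ih =>
    intro a b h
    have hk : (0 : ℝ) < (k : ℝ) + 1 := by positivity
    set B : ℝ := 3 ^ k * ((k : ℝ) + 1) ^ (((k : ℝ) + 1 + 1 - a - b) / 2) with hB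
    have hB0 : 0 ≤ B := by positivity
    have h1 : |(-1 : ℝ) ^ (k + 1) * (if b = 0 then 0 else caCoef (k + 1) a (b - 1))| ≤ B := by
      rw [abs_mul, abs_pow, abs_neg, abs_one, one_pow, one_mul]
      split_ifs with hb
      · simpa using hB0
      · obtain ⟨c, rfl⟩ := Nat.exists_eq_succ_of_ne_zero hb
        refine (ih a c (by omega)).trans (le_of_eq ?_)
        rw [hB]; congr 2; push_cast; ring
    have h2 : |(if a = 0 then 0 else caCoef (k + 1) (a - 1) b)| ≤ B := by
      split_ifs with hb
      · simpa using hB0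
      · obtain ⟨c, rfl⟩ := Nat.exists_eq_succ_of_ne_zero hb
        refine (ih c b (by omega)).trans (le_of_eq ?_)
        rw [hB]; congr 2; push_cast; ring
    have h3 : |((b : ℝ) + 1) * caCoef (k + 1) a (b + 1)| ≤ B := by
      by_cases hs : a + (b + 1) ≤ k + 1
      · have hb : (b : ℝ) + 1 ≤ (k : ℝ) + 1 := by
          have : b ≤ k := by omega
          have : (b : ℝ) ≤ k := by exact_mod_cast this
          linarith
        rw [abs_mul, abs_of_nonneg (by positivity : (0 : ℝ) ≤ (b : ℝ) + 1)]
        calc ((b : ℝ) + 1) * |caCoef (k + 1) a (b + 1)|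
            ≤ ((k : ℝ) + 1) * (3 ^ k * ((k : ℝ) + 1) ^
                (((k : ℝ) + 1 - a - ((b + 1 : ℕ) : ℝ)) / 2)) :=
              mul_le_mul hb (ih a (b + 1) hs) (abs_nonneg _) hk.le
          _ = B := by
              have e : ((k : ℝ) + 1 + 1 - a - b) / 2
                  = 1 + ((k : ℝ) + 1 - a - ((b + 1 : ℕ) : ℝ)) / 2 := by
                push_cast; ring
              rw [hB, e, Real.rpow_add hk, Real.rpow_one]; ring
      · rw [caCoef_support _ _ _ (by omega)]; simpa using hB0
    have hexp : 0 ≤ ((k : ℝ) + 1 + 1 - a - b) / 2 := by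
      have : (a : ℝ) + b ≤ k + 1 + 1 := by exact_mod_cast h
      linarith
    calc |caCoef (k + 1 + 1) a b| ≤ B + B + B := by
          rw [caCoef]
          refine (abs_add_le _ _).trans (add_le_add ((abs_add_le _ _).trans (add_le_add h1 h2)) h3)
      _ = 3 ^ (k + 1) * ((k : ℝ) + 1) ^ (((k : ℝ) + 1 + 1 - a - b) / 2) := by
          rw [hB]; ring
      _ ≤ _ := by
          push_cast
          refine mul_le_mul_of_nonneg_left ?_ (by positivity)
          exact Real.rpow_le_rpow hk.le (by linarith) hexp

lemma ca_differentiable {f : ℝ → ℂ} (hf : ContDiff ℝ (⊤ : ℕ∞) f) (n : ℕ) :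
    Differentiable ℝ (iteratedDeriv n f) :=
  hf.differentiable_iteratedDeriv n (by exact_mod_cast WithTop.coe_lt_top n)

lemma ca_contDiff {f : ℝ → ℂ} (hf : ContDiff ℝ (⊤ : ℕ∞) f) (n : ℕ) :
    ContDiff ℝ (⊤ : ℕ∞) (creAnnOp n f) := by
  have h1 : ContDiff ℝ (⊤ : ℕ∞) (deriv f) := (contDiff_infty_iff_deriv.1 hf).2
  have h2 : ContDiff ℝ (⊤ : ℕ∞) (fun y : ℝ => (y : ℂ)) := Complex.ofRealCLM.contDiff
  exact (contDiff_const.mul h1).add (h2.mul hf)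

lemma ca_iteratedDeriv {f : ℝ → ℂ} (hf : ContDiff ℝ (⊤ : ℕ∞) f) (n b : ℕ) :
    iteratedDeriv b (creAnnOp n f) = fun x : ℝ => (-1 : ℂ) ^ n * iteratedDeriv (b + 1) f x
      + (x : ℂ) * iteratedDeriv b f x + (b : ℂ) * iteratedDeriv (b - 1) f x := by
  induction b with
  | zero => funext x; simp [creAnnOp, iteratedDeriv_one]
  | succ b ih =>
    rw [iteratedDeriv_succ, ih]
    funext x
    have D : ∀ m, HasDerivAt (iteratedDeriv m f) (iteratedDeriv (m + 1) f x) x := fun m => by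
      rw [iteratedDeriv_succ]; exact (ca_differentiable hf m x).hasDerivAt
    have hx : HasDerivAt (fun y : ℝ => (y : ℂ)) 1 x := Complex.ofRealCLM.hasDerivAt
    have key := (((D (b + 1)).const_mul ((-1 : ℂ) ^ n)).add (hx.mul (D b))).add
      ((D (b - 1)).const_mul (b : ℂ))
    refine key.deriv.trans ?_
    rcases b with _ | b
    · simp; ring
    · simp; ring

lemma ca_expansion (n : ℕ) : ∀ (f : ℝ → ℂ), ContDiff ℝ (⊤ : ℕ∞) f → ∀ (x : ℝ) (m : ℕ), n ≤ m →
    ((List.range n).foldr (fun j g => creAnnOp j g) f) x =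
      ∑ a ∈ Finset.range (m + 1), ∑ b ∈ Finset.range (m + 1),
        (caCoef n a b : ℂ) * (x : ℂ) ^ a * iteratedDeriv b f x := by
  induction n with
  | zero =>
    intro f hf x m _
    rw [Finset.sum_range_succ', Finset.sum_range_succ']
    simp [caCoef]
  | succ n ih =>
    intro f hf x m hm
    rw [List.range_succ, List.foldr_append]
    simp only [List.foldr_cons, List.foldr_nil]
    rw [ih _ (ca_contDiff hf n) x m (by omega)]
    simp only [ca_iteratedDeriv hf n]
    have e1 : ∀ a, ∑ b ∈ Finset.range (m + 1), (caCoef n a b : ℂ) * (x : ℂ) ^ a *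
        ((-1 : ℂ) ^ n * iteratedDeriv (b + 1) f x)
        = ∑ b ∈ Finset.range (m + 1), (((-1) ^ n * (if b = 0 then 0 else caCoef n a (b - 1)) : ℝ) : ℂ)
          * (x : ℂ) ^ a * iteratedDeriv b f x := by
      intro a
      rw [Finset.sum_range_succ, Finset.sum_range_succ', caCoef_support n a m (by omega)]
      simp only [Nat.add_sub_cancel, Nat.succ_ne_zero, if_false, if_true]
      push_cast
      simp only [zero_mul, mul_zero, add_zero]
      exact Finset.sum_congr rfl fun b _ => by ring
    have e3 : ∀ a, ∑ b ∈ Finset.range (m + 1), (caCoef n a b : ℂ) * (x : ℂ) ^ a *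
        ((b : ℂ) * iteratedDeriv (b - 1) f x)
        = ∑ b ∈ Finset.range (m + 1), ((((b : ℝ) + 1) * caCoef n a (b + 1) : ℝ) : ℂ)
          * (x : ℂ) ^ a * iteratedDeriv b f x := by
      intro a
      rw [Finset.sum_range_succ', Finset.sum_range_succ _ m, caCoef_support n a (m + 1) (by omega)]
      simp only [Nat.add_sub_cancel]
      push_cast
      simp only [zero_mul, mul_zero, add_zero]
      exact Finset.sum_congr rfl fun b _ => by ring
    have e2 : ∑ a ∈ Finset.range (m + 1), ∑ b ∈ Finset.range (m + 1),
        (caCoef n a b : ℂ) * (x : ℂ) ^ a * ((x : ℂ) * iteratedDeriv b f x)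
        = ∑ a ∈ Finset.range (m + 1), ∑ b ∈ Finset.range (m + 1),
          ((if a = 0 then 0 else caCoef n (a - 1) b : ℝ) : ℂ)
          * (x : ℂ) ^ a * iteratedDeriv b f x := by
      rw [Finset.sum_range_succ]
      have z : ∀ b, caCoef n m b = 0 := fun b => caCoef_support n m b (by omega)
      simp only [z, Complex.ofReal_zero, zero_mul, Finset.sum_const_zero, add_zero]
      rw [Finset.sum_range_succ' _ m]
      simp only [Nat.add_sub_cancel, Nat.succ_ne_zero, if_false, if_true, Complex.ofReal_zero,
        zero_mul, Finset.sum_const_zero, add_zero]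
      exact Finset.sum_congr rfl fun a _ => Finset.sum_congr rfl fun b _ => by ring
    simp only [mul_add, Finset.sum_add_distrib]
    rw [e2]
    simp only [e1, e3]
    simp only [← Finset.sum_add_distrib]
    refine Finset.sum_congr rfl fun a _ => Finset.sum_congr rfl fun b _ => ?_
    rw [caCoef, Complex.ofReal_add, Complex.ofReal_add]
    ring

/-- **Lemma "dvpt"**: expansion of the product ∏_{j=0}^k ((-1)^j ∂_x + x)
(the factor j = 0 acting last) in the form Σ C^k_{l₁,l₂} x^{l₁} ∂^{l₂},
with |C^k_{l₁,l₂}| ≤ 3^k (k+1)^{(k+1-l₁-l₂)/2}. -/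
theorem creation_annihilation_product_expansion (k : ℕ) :
    ∃ C : ℕ → ℕ → ℝ,
      (∀ f : ℝ → ℂ, ContDiff ℝ (⊤ : ℕ∞) f → ∀ x : ℝ,
        ((List.range (k + 1)).foldr (fun j g => creAnnOp j g) f) x =
          ∑ l₁ ∈ Finset.range (k + 2), ∑ l₂ ∈ Finset.range (k + 2 - l₁),
            (C l₁ l₂ : ℂ) * (x : ℂ) ^ l₁ * iteratedDeriv l₂ f x) ∧
      ∀ l₁ l₂ : ℕ, l₁ + l₂ ≤ k + 1 →
        |C l₁ l₂| ≤ 3 ^ k * ((k : ℝ) + 1) ^ (((k : ℝ) + 1 - l₁ - l₂) / 2) := by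
  refine ⟨caCoef (k + 1), fun f hf x => ?_, caCoef_bound k⟩
  rw [ca_expansion (k + 1) f hf x (k + 1) le_rfl]
  refine Finset.sum_congr rfl fun a _ => ?_
  symm
  refine Finset.sum_subset (fun b hb => ?_) (fun b hb hb' => ?_)
  · simp only [Finset.mem_range] at *; omega
  · simp only [Finset.mem_range] at *
    rw [caCoef_support _ _ _ (by omega)]; simp

end
end
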